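/- Let B ≥ 1 with B < |𝒱|. If u = (u_1,…,u_d) is a prefix such that the rank of u_j at depth j exceeds B for at least one j ∈ {1,…,d} (i.e. u ∉ S_B), then there exist B pairwise distinct prefixes w^{(1)},…,w^{(B)} ∈ S_B, each of length d, with q(w^{(k)}) ≥ q(u) for every k ∈ {1,…,B}. -/

import Mathlib

/-- Prefix mass starting at (1-based) depth `d`. -/
noncomputable def mass {V : Type*} (q : ℕ → V → ℝ) : ℕ → List V → ℝ
  | _, [] => 1
  | d, a :: l => q d a * mass q (d + 1) l

/-- Membership in `S_K`: `u` is a prefix (length in `{1,…,L}`) whose token at each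
(1-based) depth `j` has rank at most `K` in the enumeration `vEnum`. -/
def inSK {V : Type*} (vEnum : ℕ → ℕ → V) (L K : ℕ) (u : List V) : Prop :=
  1 ≤ u.length ∧ u.length ≤ L ∧
  ∀ j : Fin u.length, ∃ k, 1 ≤ k ∧ k ≤ K ∧ vEnum ((j : ℕ) + 1) k = u.get j

/-!
At a depth `j` where `u` uses a token outside the top `B`, each of the top `B` tokens is at least as
likely as that of `u`. Place each of them in turn at depth `j`, and the likeliest token at every
other depth: this gives `B` prefixes, distinct at depth `j`, each depthwise at least as likely as
`u`.
-/

section Mass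

variable {V : Type*} {q : ℕ → V → ℝ}

theorem mass_ofFn {n : ℕ} (d : ℕ) (f : Fin n → V) :
    mass q d (List.ofFn f) = ∏ i : Fin n, q (i + d) (f i) := by
  induction n generalizing d with
  | zero => simp [mass]
  | succ n ih => simp [List.ofFn_succ, mass, ih, Fin.prod_univ_succ, add_assoc, add_comm 1]

theorem mass_ofFn_le_mass_ofFn {n d : ℕ} {f g : Fin n → V}
    (hf : ∀ i : Fin n, 0 ≤ q (i + d) (f i))
    (hfg : ∀ i : Fin n, q (i + d) (f i) ≤ q (i + d) (g i)) :
    mass q d (List.ofFn f) ≤ mass q d (List.ofFn g) := by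
  simpa only [mass_ofFn] using Finset.prod_le_prod (fun i _ => hf i) (fun i _ => hfg i)

end Mass

section PrefixOfRanks

variable {V : Type*} {vEnum : ℕ → ℕ → V} {n : ℕ}

/-- The prefix of length `n` with prescribed ranks. Positions `i : Fin n` count from `0` and depths
from `1`, so position `i` receives the token of rank `r i` at depth `i + 1`. -/
def prefixOfRanks (vEnum : ℕ → ℕ → V) (r : Fin n → ℕ) : List V :=
  List.ofFn fun i : Fin n => vEnum (i + 1) (r i)

@[simp]
theorem length_prefixOfRanks (r : Fin n → ℕ) : (prefixOfRanks vEnum r).length = n :=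
  List.length_ofFn

theorem inSK_prefixOfRanks {L K : ℕ} {r : Fin n → ℕ} (hn : 1 ≤ n) (hnL : n ≤ L)
    (hr : r ∈ Set.univ.pi fun _ => Set.Icc 1 K) : inSK vEnum L K (prefixOfRanks vEnum r) := by
  refine ⟨by simpa using hn, by simpa using hnL, fun i => ?_⟩
  obtain ⟨hr_pos, hr_le⟩ := hr (i.cast (length_prefixOfRanks r)) trivial
  exact ⟨_, hr_pos, hr_le, (List.get_ofFn _ i).symm⟩

theorem injOn_prefixOfRanks {s : Fin n → Set ℕ}
    (hinj : ∀ i : Fin n, Set.InjOn (vEnum (i + 1)) (s i)) :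
    Set.InjOn (prefixOfRanks vEnum) (Set.univ.pi s) := fun _ hr _ hr' h =>
  funext fun i => hinj i (hr i trivial) (hr' i trivial) (congrFun (List.ofFn_injective h) i)

end PrefixOfRanks

/-- `e 1, …, e B` are, in nonincreasing order of weight, `B` distinct tokens that are heaviest for
`p`. The values of `e` outside `{1, …, B}` are unconstrained. -/
structure ListsHeaviest {V α : Type*} [Preorder α] (p : V → α) (e : ℕ → V) (B : ℕ) : Prop where
  injOn : Set.InjOn e (Set.Icc 1 B)
  antitoneOn : AntitoneOn (p ∘ e) (Set.Icc 1 B)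
  le_of_notMem : ∀ v ∉ e '' Set.Icc 1 B, ∀ k ∈ Set.Icc 1 B, p v ≤ p (e k)

namespace ListsHeaviest

variable {V α : Type*} [Preorder α] {p : V → α} {e : ℕ → V} {B : ℕ}

theorem of_bijOn {N : ℕ} (hBN : B ≤ N) (hbij : Set.BijOn e (Set.Icc 1 N) Set.univ)
    (hanti : AntitoneOn (p ∘ e) (Set.Icc 1 N)) : ListsHeaviest p e B where
  injOn := hbij.injOn.mono (Set.Icc_subset_Icc_right hBN)
  antitoneOn := hanti.mono (Set.Icc_subset_Icc_right hBN)
  le_of_notMem v hv k hk := by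
    obtain ⟨r, hr, rfl⟩ := hbij.surjOn (Set.mem_univ v)
    have hBr : B < r := not_le.mp fun hrB => hv (Set.mem_image_of_mem e ⟨hr.1, hrB⟩)
    exact hanti ⟨hk.1, hk.2.trans hBN⟩ hr (hk.2.trans hBr.le)

theorem le_first (h : ListsHeaviest p e B) (hB : 1 ≤ B) (v : V) : p v ≤ p (e 1) := by
  have one_mem : 1 ∈ Set.Icc 1 B := ⟨le_rfl, hB⟩
  by_cases hv : v ∈ e '' Set.Icc 1 B
  · obtain ⟨k, hk, rfl⟩ := hv
    exact h.antitoneOn one_mem hk hk.1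
  · exact h.le_of_notMem v hv 1 one_mem

end ListsHeaviest

theorem mulSingle_mem_pi_Icc {ι M : Type*} [DecidableEq ι] [Preorder M] [One M] {b x : M}
    (hx : x ∈ Set.Icc 1 b) (j : ι) : Pi.mulSingle j x ∈ Set.univ.pi fun _ => Set.Icc 1 b :=
  have one_mem_pi : (1 : ι → M) ∈ Set.univ.pi fun _ => Set.Icc 1 b :=
    fun _ _ => ⟨le_rfl, hx.1.trans hx.2⟩
  (Set.update_mem_pi_iff_of_mem one_mem_pi).mpr fun _ => hx

theorem mass_le_mass_prefixOfRanks_mulSingle {V : Type*} {q : ℕ → V → ℝ} {vEnum : ℕ → ℕ → V}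
    {B : ℕ} {u : List V} (hq : ∀ i : Fin u.length, 0 ≤ q (i + 1) (u.get i))
    (htop : ∀ i : Fin u.length, ListsHeaviest (q (i + 1)) (vEnum (i + 1)) B)
    {j : Fin u.length} (hj : u.get j ∉ vEnum (j + 1) '' Set.Icc 1 B)
    {k : ℕ} (hk : k ∈ Set.Icc 1 B) :
    mass q 1 u ≤ mass q 1 (prefixOfRanks vEnum (Pi.mulSingle j k)) := by
  conv_lhs => rw [← List.ofFn_get u]
  refine mass_ofFn_le_mass_ofFn hq fun i => ?_
  obtain rfl | hij := eq_or_ne i j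
  · rw [Pi.mulSingle_eq_same]
    exact (htop i).le_of_notMem _ hj k hk
  · rw [Pi.mulSingle_eq_of_ne hij]
    exact (htop i).le_first (hk.1.trans hk.2) _

theorem exists_B_dominating_prefixes_in_SB_general {V : Type*} {L B : ℕ} {q : ℕ → V → ℝ}
    (hq : ∀ i ∈ Finset.Icc 1 L, ∀ v : V, 0 ≤ q i v) {vEnum : ℕ → ℕ → V}
    (htop : ∀ i ∈ Finset.Icc 1 L, ListsHeaviest (q i) (vEnum i) B)
    {u : List V} (huL : u.length ≤ L)
    (hnot : ∃ j : Fin u.length, ∀ k, 1 ≤ k → k ≤ B → vEnum ((j : ℕ) + 1) k ≠ u.get j) :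
    ∃ w : Fin B → List V, Function.Injective w ∧
      ∀ k : Fin B, inSK vEnum L B (w k) ∧ (w k).length = u.length ∧
        mass q 1 u ≤ mass q 1 (w k) := by
  obtain ⟨j, hj⟩ := hnot
  have depth_mem (i : Fin u.length) : (i : ℕ) + 1 ∈ Finset.Icc 1 L :=
    Finset.mem_Icc.mpr ⟨by lia, by lia⟩
  have htop_u (i : Fin u.length) := htop _ (depth_mem i)
  have hj_notMem : u.get j ∉ vEnum (j + 1) '' Set.Icc 1 B :=
    fun ⟨k, hk, hku⟩ => hj k hk.1 hk.2 hku
  have rank_mem (k : Fin B) : (k : ℕ) + 1 ∈ Set.Icc 1 B := ⟨by lia, by lia⟩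
  have ranks_mem (k : Fin B) := mulSingle_mem_pi_Icc (rank_mem k) j
  refine ⟨fun k => prefixOfRanks vEnum (Pi.mulSingle j (k + 1 : ℕ)), fun k k' h => ?_, fun k =>
    ⟨inSK_prefixOfRanks j.pos huL (ranks_mem k), length_prefixOfRanks _, ?_⟩⟩
  · have ranks_eq := injOn_prefixOfRanks (fun i => (htop_u i).injOn) (ranks_mem k) (ranks_mem k') h
    exact Fin.ext (Nat.succ_injective (Pi.mulSingle_injective j ranks_eq))
  · exact mass_le_mass_prefixOfRanks_mulSingle (fun i => hq _ (depth_mem i) _) htop_u hj_notMem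
      (rank_mem k)

/-- let `1 ≤ B < |𝒱|`. If `u` is a prefix that uses a token of rank
exceeding `B` at some depth (i.e. `u ∉ S_B`), then there exist `B` pairwise distinct
prefixes in `S_B`, each of the same length as `u`, whose masses all dominate that of `u`.
Here `vEnum i k` is the rank-`k` token at depth `i` in a fixed
nonincreasing-probability enumeration of `𝒱`. -/
theorem exists_B_dominating_prefixes_in_SB {V : Type*} [Fintype V] [Nonempty V]
    (L : ℕ) (hL : 1 ≤ L) (q : ℕ → V → ℝ)
    (hq0 : ∀ i ∈ Finset.Icc 1 L, ∀ v : V, 0 ≤ q i v)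
    (hq1 : ∀ i ∈ Finset.Icc 1 L, ∑ v : V, q i v = 1)
    (vEnum : ℕ → ℕ → V)
    (hbij : ∀ i ∈ Finset.Icc 1 L, Set.BijOn (vEnum i) (Set.Icc 1 (Fintype.card V)) Set.univ)
    (hmono : ∀ i ∈ Finset.Icc 1 L, ∀ k k' : ℕ, 1 ≤ k → k ≤ k' → k' ≤ Fintype.card V →
      q i (vEnum i k') ≤ q i (vEnum i k))
    (B : ℕ) (hB : 1 ≤ B) (hBV : B < Fintype.card V)
    (u : List V) (hu : 1 ≤ u.length ∧ u.length ≤ L)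
    (hnot : ∃ j : Fin u.length, ∀ k, 1 ≤ k → k ≤ B → vEnum ((j : ℕ) + 1) k ≠ u.get j) :
    ∃ w : Fin B → List V, Function.Injective w ∧
      ∀ k : Fin B, inSK vEnum L B (w k) ∧ (w k).length = u.length ∧
        mass q 1 u ≤ mass q 1 (w k) :=
  exists_B_dominating_prefixes_in_SB_general hq0
    (fun i hi => .of_bijOn hBV.le (hbij i hi) fun k hk k' hk' hkk' =>
      hmono i hi k k' hk.1 hkk' hk'.2) hu.2 hnot
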